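/- arXiv:1311.4066 — 2 statements merged into one kernel-verified Lean document; each statement's English description precedes it below -/
import Mathlib

section
/- Let B = [[1,−1],[1/2,1/2]], so B⁻¹ = [[1/2,1],[−1/2,1]]. Let S be any nonempty collection of bitstrings in {0,1}³ closed under complementation, and let C = Σ_{b ∈ S} ⟨b| be the corresponding 3-arity cogate. Then the change of basis of C under (B, B, B), namely C′(b) = Σ_{c∈{0,1}³} C(c)·∏_{i=1}^3 B⁻¹(cᵢ,bᵢ), is Pfaffian: there exist β ∈ ℂ and θ₁₂, θ₁₃, θ₂₃ ∈ ℂ such that C′ = β·(θ₂₃⟨100| + θ₁₃⟨010| + θ₁₂⟨001| + ⟨111|). (Taking all 15 such collections S recovers the 15 3-arity cogates of the paper's Theorem 4.6.) -/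
/-!
Complementing the bit `c` negates `B⁻¹ c 0 = ±1/2` and fixes `B⁻¹ c 1 = 1`. For a cogate `C`
invariant under complementation, reindexing the sum that defines `C′(b)` by complementation
therefore gives `C′(b) = (-1)^z C′(b)`, where `z` is the number of zeros of `b`. Hence `C′` is
supported on the bitstrings with an even number of zeros, as every dual sub-Pfaffian is. In arity 3
a vector with this support is Pfaffian as soon as it does not vanish at `111`, and
`C′(111) = ∑ c, C c`.
-/

open scoped BigOperators

noncomputable section

/-- Change of basis on an `n`-arity gate: `((A₁⊗…⊗Aₙ)G)(b) = Σ_c (∏ᵢ Aᵢ(bᵢ,cᵢ))·G(c)`. -/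
def cobGate {n : ℕ} (A : Fin n → Matrix (Fin 2) (Fin 2) ℂ) (G : (Fin n → Fin 2) → ℂ) :
    (Fin n → Fin 2) → ℂ :=
  fun b => ∑ c : Fin n → Fin 2, (∏ i, A i (b i) (c i)) * G c

/-- Change of basis on an `n`-arity cogate: `C′(b) = Σ_c C(c)·∏ᵢ Aᵢ⁻¹(cᵢ,bᵢ)`. -/
def cobCogate {n : ℕ} (A : Fin n → Matrix (Fin 2) (Fin 2) ℂ) (C : (Fin n → Fin 2) → ℂ) :
    (Fin n → Fin 2) → ℂ :=
  fun b => ∑ c : Fin n → Fin 2, C c * ∏ i, (A i)⁻¹ (c i) (b i)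

/-- The standard basis vector (ket/bra) at the bitstring `v`. -/
def ket {n : ℕ} (v : Fin n → Fin 2) : (Fin n → Fin 2) → ℂ :=
  fun b => if b = v then 1 else 0

/-- The support of a bitstring. -/
def supp {n : ℕ} (b : Fin n → Fin 2) : Finset (Fin n) :=
  Finset.univ.filter fun i => b i = 1

/-- Fuel-driven Laplace expansion of the Pfaffian of a principal submatrix. -/
def subPfAux {n : ℕ} (Ξ : Matrix (Fin n) (Fin n) ℂ) : ℕ → Finset (Fin n) → ℂ
  | 0, I => if I = ∅ then 1 else 0
  | fuel + 1, I =>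
    if hI : I.Nonempty then
      if Odd I.card then 0
      else
        ∑ i ∈ I.erase (I.min' hI),
          (-1 : ℂ) ^ (I.filter fun j => j ≤ i).card * Ξ (I.min' hI) i *
            subPfAux Ξ fuel ((I.erase (I.min' hI)).erase i)
    else 1

/-- `subPf Ξ I` is the Pfaffian `Pf(Ξ|_I)` of the principal submatrix of `Ξ` on the
rows and columns in `I` (`1` on the empty set, `0` for odd `|I|`). -/
def subPf {n : ℕ} (Ξ : Matrix (Fin n) (Fin n) ℂ) (I : Finset (Fin n)) : ℂ :=
  subPfAux Ξ I.card I

/-- The sub-Pfaffian vector: coordinate `Pf(Ξ|_I)` at the bitstring with support `I`. -/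
def sPf {n : ℕ} (Ξ : Matrix (Fin n) (Fin n) ℂ) : (Fin n → Fin 2) → ℂ :=
  fun b => subPf Ξ (supp b)

/-- The dual sub-Pfaffian vector: coordinate `Pf(Θ|_{Jᶜ})` at the bitstring with support `J`. -/
def sPfStar {n : ℕ} (Θ : Matrix (Fin n) (Fin n) ℂ) : (Fin n → Fin 2) → ℂ :=
  fun b => subPf Θ (supp b)ᶜ

/-- A matrix is skew-symmetric. -/
def IsSkew {n : ℕ} (Ξ : Matrix (Fin n) (Fin n) ℂ) : Prop :=
  ∀ i j, Ξ j i = -Ξ i j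

/-- A gate is Pfaffian under the change of basis `M`. -/
def IsPfaffGate {n : ℕ} (M : Fin n → Matrix (Fin 2) (Fin 2) ℂ) (G : (Fin n → Fin 2) → ℂ) : Prop :=
  ∃ (α : ℂ) (Ξ : Matrix (Fin n) (Fin n) ℂ), IsSkew Ξ ∧ cobGate M G = fun b => α * sPf Ξ b

/-- A cogate is Pfaffian under the change of basis `M`. -/
def IsPfaffCogate {n : ℕ} (M : Fin n → Matrix (Fin 2) (Fin 2) ℂ) (C : (Fin n → Fin 2) → ℂ) : Prop :=
  ∃ (β : ℂ) (Θ : Matrix (Fin n) (Fin n) ℂ), IsSkew Θ ∧ cobCogate M C = fun b => β * sPfStar Θ b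

def matB : Matrix (Fin 2) (Fin 2) ℂ := !![1, -1; 1/2, 1/2]

/-- Bitwise complement of a bitstring. -/
def bcompl {n : ℕ} (b : Fin n → Fin 2) : Fin n → Fin 2 :=
  fun i => if b i = 0 then 1 else 0

theorem bcompl_apply {n : ℕ} (b : Fin n → Fin 2) (i : Fin n) : bcompl b i = (b i).rev := by
  unfold bcompl
  generalize b i = x
  decide +revert

theorem bcompl_involutive {n : ℕ} : Function.Involutive (bcompl (n := n)) := fun b => by
  funext i
  simp only [bcompl_apply, Fin.rev_rev]

theorem bcompl_mem_iff {n : ℕ} {S : Finset (Fin n → Fin 2)} (hS : ∀ b ∈ S, bcompl b ∈ S)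
    (b : Fin n → Fin 2) : bcompl b ∈ S ↔ b ∈ S :=
  ⟨fun h => bcompl_involutive b ▸ hS _ h, hS b⟩

theorem cobCogate_comp_bcompl {n : ℕ} {A : Fin n → Matrix (Fin 2) (Fin 2) ℂ}
    {ε : Fin n → Fin 2 → ℂ} (hA : ∀ i x y, (A i)⁻¹ x.rev y = ε i y * (A i)⁻¹ x y)
    (C : (Fin n → Fin 2) → ℂ) (b : Fin n → Fin 2) :
    cobCogate A (C ∘ bcompl) b = (∏ i, ε i (b i)) * cobCogate A C b :=
  calc ∑ c, C (bcompl c) * ∏ i, (A i)⁻¹ (c i) (b i)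
    _ = ∑ c, C c * ∏ i, (A i)⁻¹ (c i).rev (b i) :=
      Fintype.sum_equiv bcompl_involutive.toPerm _ _ fun c => by
        simp only [Function.Involutive.coe_toPerm, bcompl_apply, Fin.rev_rev]
    _ = ∑ c, (∏ i, ε i (b i)) * (C c * ∏ i, (A i)⁻¹ (c i) (b i)) := by
      simp only [hA, Finset.prod_mul_distrib, mul_left_comm]
    _ = (∏ i, ε i (b i)) * cobCogate A C b := (Finset.mul_sum _ _ _).symm

theorem matB_inv : matB⁻¹ = !![1/2, 1; -1/2, 1] := by
  apply Matrix.inv_eq_right_inv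
  ext i j
  fin_cases i <;> fin_cases j <;> norm_num [matB, Matrix.mul_apply, Fin.sum_univ_two]

theorem matB_inv_rev (x y : Fin 2) :
    matB⁻¹ x.rev y = (if y = 1 then 1 else -1) * matB⁻¹ x y := by
  rw [matB_inv]
  fin_cases x <;> fin_cases y <;> norm_num [Fin.rev]

theorem matB_inv_one_right (x : Fin 2) : matB⁻¹ x 1 = 1 := by
  rw [matB_inv]
  fin_cases x <;> rfl

theorem prod_ite_eq_neg_one_pow_card_compl_supp {n : ℕ} (b : Fin n → Fin 2) :
    ∏ i, (if b i = 1 then (1 : ℂ) else -1) = (-1) ^ (supp b)ᶜ.card := by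
  rw [Finset.prod_ite, Finset.prod_const_one, one_mul, Finset.prod_const, supp,
    Finset.compl_filter]

theorem cobCogate_matB_eq_zero_of_odd {n : ℕ} {C : (Fin n → Fin 2) → ℂ} (hC : C ∘ bcompl = C)
    {b : Fin n → Fin 2} (hb : Odd (supp b)ᶜ.card) : cobCogate (fun _ => matB) C b = 0 := by
  have h := cobCogate_comp_bcompl (fun _ => matB_inv_rev) C b
  rw [hC, prod_ite_eq_neg_one_pow_card_compl_supp, hb.neg_one_pow, neg_one_mul] at h
  exact self_eq_neg.mp h

theorem cobCogate_matB_one {n : ℕ} (C : (Fin n → Fin 2) → ℂ) :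
    cobCogate (fun _ => matB) C 1 = ∑ c, C c := by
  simp only [cobCogate, Pi.one_apply, matB_inv_one_right, Finset.prod_const_one, mul_one]

theorem even_card_compl_supp_iff (b : Fin 3 → Fin 2) : Even (supp b)ᶜ.card ↔
    b = ![1, 0, 0] ∨ b = ![0, 1, 0] ∨ b = ![0, 0, 1] ∨ b = ![1, 1, 1] := by
  decide +revert

theorem exists_eq_mul_ket_of_eq_zero_of_odd {D : (Fin 3 → Fin 2) → ℂ}
    (hodd : ∀ b, Odd (supp b)ᶜ.card → D b = 0) (hone : D ![1, 1, 1] ≠ 0) :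
    ∃ β θ12 θ13 θ23 : ℂ,
      D = fun b => β * (θ23 * ket ![1, 0, 0] b + θ13 * ket ![0, 1, 0] b
          + θ12 * ket ![0, 0, 1] b + ket ![1, 1, 1] b) := by
  refine ⟨D ![1, 1, 1], D ![0, 0, 1] / D ![1, 1, 1], D ![0, 1, 0] / D ![1, 1, 1],
    D ![1, 0, 0] / D ![1, 1, 1], funext fun b => ?_⟩
  by_cases hb : Even (supp b)ᶜ.card
  · rcases (even_card_compl_supp_iff b).mp hb with rfl | rfl | rfl | rfl <;>
      simp [ket, mul_div_cancel₀, hone]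
  · rw [hodd b (Nat.not_even_iff_odd.mp hb)]
    rw [even_card_compl_supp_iff] at hb
    push Not at hb
    simp [ket, hb]

theorem stmt7_general {C : (Fin 3 → Fin 2) → ℂ} (hC : C ∘ bcompl = C) (hsum : ∑ c, C c ≠ 0) :
    ∃ β θ12 θ13 θ23 : ℂ,
      cobCogate ![matB, matB, matB] C =
        fun b => β * (θ23 * ket ![1, 0, 0] b + θ13 * ket ![0, 1, 0] b
          + θ12 * ket ![0, 0, 1] b + ket ![1, 1, 1] b) := by
  have hM : ![matB, matB, matB] = fun _ => matB := by
    funext i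
    fin_cases i <;> rfl
  have h111 : (![1, 1, 1] : Fin 3 → Fin 2) = 1 := by decide
  rw [hM]
  refine exists_eq_mul_ket_of_eq_zero_of_odd (fun _ => cobCogate_matB_eq_zero_of_odd hC) ?_
  rwa [h111, cobCogate_matB_one]

/-- arity-3 cogate part of Theorem 4.6. -/
theorem stmt7 (S : Finset (Fin 3 → Fin 2)) (hS : S.Nonempty)
    (hcl : ∀ b ∈ S, bcompl b ∈ S) :
    ∃ β θ12 θ13 θ23 : ℂ,
      cobCogate ![matB, matB, matB] (fun b => if b ∈ S then (1 : ℂ) else 0) =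
        fun b => β * (θ23 * ket ![1, 0, 0] b + θ13 * ket ![0, 1, 0] b
          + θ12 * ket ![0, 0, 1] b + ket ![1, 1, 1] b) :=
  stmt7_general (funext fun b => by simp only [Function.comp_apply, bcompl_mem_iff hcl])
    (by simpa using hS.ne_empty)
end
end

section
/- Let A = [[1,1],[1,−1]]. For every bitstring b ∈ {0,1}⁴, the 4-arity gate |b⟩ + |b̄⟩ (where b̄ is the bitwise complement of b) is Pfaffian under the homogeneous change of basis (A, A, A, A): there exist α ∈ ℂ and a skew-symmetric matrix Ξ ∈ ℂ^{4×4} such that (A⊗A⊗A⊗A)(|b⟩ + |b̄⟩) = α·sPf(Ξ). -/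
open scoped BigOperators

noncomputable section

def matA : Matrix (Fin 2) (Fin 2) ℂ := !![1, 1; 1, -1]

/-!
With `s i = (-1)^(b i)`, the transform of `|b⟩` at `c` is the character value `∏_{i ∈ supp c} s i`.
Complementing `b` negates `s`, so the transform of `|b⟩ + |b̄⟩` is `2 ∏_{i ∈ supp c} s i` when
`|supp c|` is even and `0` otherwise. Let `J` be the skew-symmetric matrix with all entries `1`
above the diagonal. Its principal submatrices of even size have Pfaffian `1`, because every term of
the Laplace expansion is `±1` and the signs alternate over an odd number of columns. Since
`Pf(D Ξ D) = det D · Pf Ξ` for diagonal `D`, the matrix `diag(s) J diag(s)` has sub-Pfaffians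
`∏_{i ∈ I} s i` for `|I|` even, and the transform is twice its sub-Pfaffian vector.
-/

section Pfaffian

open scoped Finset

variable {n : ℕ}

lemma sum_neg_one_pow_card_filter_le {α R : Type*} [LinearOrder α] [Ring R] (I : Finset α) :
    ∑ i ∈ I, (-1 : R) ^ #{j ∈ I | j ≤ i} = if Even #I then 0 else -1 := by
  induction I using Finset.induction_on_max with
  | empty => simp
  | insert a I ha ih =>
    have haI : a ∉ I := fun h => lt_irrefl a (ha a h)
    have rank_max : {j ∈ insert a I | j ≤ a} = insert a I :=
      Finset.filter_true_of_mem fun j hj =>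
        (Finset.mem_insert.1 hj).elim le_of_eq fun h => (ha j h).le
    have rank_old : ∀ i ∈ I, {j ∈ insert a I | j ≤ i} = {j ∈ I | j ≤ i} := fun i hi => by
      rw [Finset.filter_insert, if_neg (ha i hi).not_ge]
    rw [Finset.sum_insert haI, rank_max, Finset.sum_congr rfl fun i hi => by rw [rank_old i hi],
      ih, Finset.card_insert_of_notMem haI]
    rcases Nat.even_or_odd #I with h | h
    · simp [h, h.add_one.neg_one_pow, Nat.even_add_one]
    · simp [Nat.not_even_iff_odd.2 h, h.add_one.neg_one_pow, Nat.even_add_one]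

lemma sum_erase_min'_neg_one_pow_card_filter_le {α R : Type*} [LinearOrder α] [Ring R]
    {I : Finset α} (hI : I.Nonempty) (heven : Even #I) :
    ∑ i ∈ I.erase (I.min' hI), (-1 : R) ^ #{j ∈ I | j ≤ i} = 1 := by
  have rank_min : {j ∈ I | j ≤ I.min' hI} = {I.min' hI} := by
    ext j
    simp only [Finset.mem_filter, Finset.mem_singleton]
    exact ⟨fun h => le_antisymm h.2 (I.min'_le j h.1),
      fun h => ⟨h.symm ▸ I.min'_mem hI, h.le⟩⟩
  have hsum := sum_neg_one_pow_card_filter_le (R := R) I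
  rw [← Finset.add_sum_erase I _ (I.min'_mem hI), rank_min, Finset.card_singleton, pow_one,
    if_pos heven] at hsum
  exact (neg_add_eq_zero.1 hsum).symm

lemma card_erase_erase_add_two {α : Type*} [DecidableEq α] {I : Finset α} {i j : α} (hi : i ∈ I)
    (hj : j ∈ I.erase i) : #((I.erase i).erase j) + 2 = #I := by
  rw [← Finset.card_erase_add_one hi, ← Finset.card_erase_add_one hj]

lemma subPfAux_eq_of_card_le (Ξ : Matrix (Fin n) (Fin n) ℂ) {fuel fuel' : ℕ} {I : Finset (Fin n)}
    (h : #I ≤ fuel) (h' : #I ≤ fuel') : subPfAux Ξ fuel I = subPfAux Ξ fuel' I := by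
  induction fuel generalizing fuel' I with
  | zero =>
    obtain rfl : I = ∅ := Finset.card_eq_zero.1 (Nat.le_zero.1 h)
    cases fuel' <;> simp [subPfAux]
  | succ fuel ih =>
    cases fuel' with
    | zero =>
      obtain rfl : I = ∅ := Finset.card_eq_zero.1 (Nat.le_zero.1 h')
      simp [subPfAux]
    | succ fuel' =>
      rw [subPfAux, subPfAux]
      split_ifs with hI
      · rfl
      · refine Finset.sum_congr rfl fun i hi => ?_
        have hcard := card_erase_erase_add_two (I.min'_mem hI) hi
        rw [ih (fuel' := fuel') (by omega) (by omega)]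
      · rfl

lemma subPf_empty (Ξ : Matrix (Fin n) (Fin n) ℂ) : subPf Ξ ∅ = 1 := by
  simp [subPf, subPfAux]

lemma subPf_of_odd (Ξ : Matrix (Fin n) (Fin n) ℂ) {I : Finset (Fin n)} (hodd : Odd #I) :
    subPf Ξ I = 0 := by
  obtain ⟨k, hk⟩ := Nat.exists_eq_add_one.2 hodd.pos
  rw [subPf, hk, subPfAux, dif_pos (Finset.card_pos.1 hodd.pos), if_pos hodd]

lemma subPf_eq_sum_erase_min' (Ξ : Matrix (Fin n) (Fin n) ℂ) {I : Finset (Fin n)}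
    (hI : I.Nonempty) (heven : Even #I) :
    subPf Ξ I = ∑ i ∈ I.erase (I.min' hI), (-1 : ℂ) ^ #{j ∈ I | j ≤ i} * Ξ (I.min' hI) i *
      subPf Ξ ((I.erase (I.min' hI)).erase i) := by
  obtain ⟨k, hk⟩ := Nat.exists_eq_add_one.2 hI.card_pos
  rw [subPf, hk, subPfAux, dif_pos hI, if_neg (Nat.not_odd_iff_even.2 heven)]
  refine Finset.sum_congr rfl fun i hi => ?_
  have hcard := card_erase_erase_add_two (I.min'_mem hI) hi
  rw [subPf, subPfAux_eq_of_card_le Ξ (by omega) le_rfl]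

lemma subPf_diagonal_mul_mul_diagonal (s : Fin n → ℂ) (Ξ : Matrix (Fin n) (Fin n) ℂ)
    (I : Finset (Fin n)) :
    subPf (Matrix.diagonal s * Ξ * Matrix.diagonal s) I = (∏ i ∈ I, s i) * subPf Ξ I := by
  induction I using Finset.strongInduction with
  | H I ih =>
    rcases Nat.even_or_odd #I with heven | hodd
    · rcases I.eq_empty_or_nonempty with rfl | hI
      · simp only [subPf_empty, Finset.prod_empty, mul_one]
      · rw [subPf_eq_sum_erase_min' _ hI heven, subPf_eq_sum_erase_min' _ hI heven, Finset.mul_sum]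
        refine Finset.sum_congr rfl fun i hi => ?_
        have hmin := I.min'_mem hI
        rw [ih _ ((Finset.erase_subset _ _).trans_ssubset (Finset.erase_ssubset hmin)),
          Matrix.mul_diagonal, Matrix.diagonal_mul, ← Finset.mul_prod_erase I s hmin,
          ← Finset.mul_prod_erase (I.erase (I.min' hI)) s hi]
        ring
    · rw [subPf_of_odd _ hodd, subPf_of_odd _ hodd, mul_zero]

lemma IsSkew.diagonal_mul_mul_diagonal {Ξ : Matrix (Fin n) (Fin n) ℂ} (hΞ : IsSkew Ξ)
    (s : Fin n → ℂ) : IsSkew (Matrix.diagonal s * Ξ * Matrix.diagonal s) := fun i j => by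
  simp only [Matrix.mul_diagonal, Matrix.diagonal_mul, hΞ i j]
  ring

/-- The skew-symmetric matrix with all entries `1` above the diagonal, the template that
conjugation by a diagonal matrix of signs turns into the matrices of the sub-Pfaffian vectors. -/
def skewOnes (n : ℕ) : Matrix (Fin n) (Fin n) ℂ :=
  Matrix.of fun i j => if i < j then 1 else if j < i then -1 else 0

lemma isSkew_skewOnes (n : ℕ) : IsSkew (skewOnes n) := by
  intro i j
  rcases lt_trichotomy i j with h | rfl | h
  · simp [skewOnes, h, h.not_gt]
  · simp [skewOnes]
  · simp [skewOnes, h, h.not_gt]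

lemma subPf_skewOnes (I : Finset (Fin n)) :
    subPf (skewOnes n) I = if Even #I then 1 else 0 := by
  induction I using Finset.strongInduction with
  | H I ih =>
    split_ifs with heven
    · rcases I.eq_empty_or_nonempty with rfl | hI
      · exact subPf_empty _
      · rw [subPf_eq_sum_erase_min' _ hI heven]
        refine (Finset.sum_congr rfl fun i hi => ?_).trans
          (sum_erase_min'_neg_one_pow_card_filter_le hI heven)
        have hmin := I.min'_mem hI
        have heven' : Even #((I.erase (I.min' hI)).erase i) := by
          rwa [← card_erase_erase_add_two hmin hi, Nat.even_add, iff_true_right even_two] at heven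
        have hentry : skewOnes n (I.min' hI) i = 1 := if_pos (I.min'_lt_of_mem_erase_min' hI hi)
        rw [ih _ ((Finset.erase_subset _ _).trans_ssubset (Finset.erase_ssubset hmin)),
          if_pos heven', hentry, mul_one, mul_one]
    · exact subPf_of_odd _ (Nat.not_even_iff_odd.1 heven)

end Pfaffian

section ChangeOfBasis

open scoped Finset

variable {n : ℕ}

lemma cobGate_add (A : Fin n → Matrix (Fin 2) (Fin 2) ℂ) (G H : (Fin n → Fin 2) → ℂ) :
    cobGate A (G + H) = cobGate A G + cobGate A H := by
  ext c
  simp only [cobGate, Pi.add_apply, mul_add, Finset.sum_add_distrib]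

lemma cobGate_ket (A : Fin n → Matrix (Fin 2) (Fin 2) ℂ) (b c : Fin n → Fin 2) :
    cobGate A (ket b) c = ∏ i, A i (c i) (b i) := by
  simp [cobGate, ket]

/-- The sign vector of a bitstring `b`, whose products over supports are the coordinates of the
transform of `|b⟩` under `matA`. -/
def bitSign (b : Fin n → Fin 2) (i : Fin n) : ℂ :=
  (-1) ^ (b i : ℕ)

lemma bitSign_bcompl (b : Fin n → Fin 2) (i : Fin n) : bitSign (bcompl b) i = -bitSign b i := by
  rcases Fin.exists_fin_two.1 ⟨b i, rfl⟩ with h | h <;> simp [bitSign, bcompl, h]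

lemma matA_apply (x y : Fin 2) : matA x y = if x = 1 then (-1) ^ (y : ℕ) else 1 := by
  fin_cases x <;> fin_cases y <;> simp [matA]

lemma cobGate_matA_ket (b c : Fin n → Fin 2) :
    cobGate (fun _ => matA) (ket b) c = ∏ i ∈ supp c, bitSign b i := by
  simp only [cobGate_ket, matA_apply, supp, Finset.prod_filter, bitSign]

lemma cobGate_matA_ket_bcompl (b c : Fin n → Fin 2) :
    cobGate (fun _ => matA) (ket (bcompl b)) c =
      (-1) ^ #(supp c) * ∏ i ∈ supp c, bitSign b i := by
  simp only [cobGate_matA_ket, bitSign_bcompl, Finset.prod_neg]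

lemma cobGate_matA_ket_add_ket_bcompl (b c : Fin n → Fin 2) :
    cobGate (fun _ => matA) (ket b + ket (bcompl b)) c =
      if Even #(supp c) then 2 * ∏ i ∈ supp c, bitSign b i else 0 := by
  rw [cobGate_add, Pi.add_apply, cobGate_matA_ket, cobGate_matA_ket_bcompl]
  split_ifs with h
  · rw [h.neg_one_pow, one_mul, two_mul]
  · rw [(Nat.not_even_iff_odd.1 h).neg_one_pow, neg_one_mul, add_neg_cancel]

end ChangeOfBasis

theorem stmt8_general {n : ℕ} (b : Fin n → Fin 2) :
    IsPfaffGate (fun _ => matA) (ket b + ket (bcompl b)) := by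
  refine ⟨2, Matrix.diagonal (bitSign b) * skewOnes n * Matrix.diagonal (bitSign b),
    (isSkew_skewOnes n).diagonal_mul_mul_diagonal _, funext fun c => ?_⟩
  rw [cobGate_matA_ket_add_ket_bcompl, sPf, subPf_diagonal_mul_mul_diagonal, subPf_skewOnes,
    mul_ite, mul_one, mul_zero, mul_ite, mul_zero]

/-- complemented-pair 4-arity gates of Theorem 4.6 are Pfaffian under `A`. -/
theorem stmt8 (b : Fin 4 → Fin 2) :
    ∃ (α : ℂ) (Ξ : Matrix (Fin 4) (Fin 4) ℂ), IsSkew Ξ ∧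
      cobGate ![matA, matA, matA, matA] (ket b + ket (bcompl b)) =
        fun c => α * sPf Ξ c := by
  rw [show ![matA, matA, matA, matA] = fun _ => matA from FinVec.etaExpand_eq fun _ => matA]
  exact stmt8_general b
end
end
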